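/- Let (U,s,h) be a finite SL-structure satisfying the septraction M₁ −⊛ M₂ with witness h' (disjoint from h, (U,s,h') ⊨ M₁, (U,s,h⊎h') ⊨ M₂). Let Y be a finite set of variables none of which is allocated in h (s(y) ∉ dom(h) for all y ∈ Y), and suppose M₁ forces the variables of Y ∩ nvar(M₁) to be unallocated in h' and M₁ contains |h| ≥ min₁, M₂ contains |h| ≥ min₂. Let q be the number of distinct locations in s(Y ∩ nvar(M₁)). Then |dom(h)| ≤ |U| − min₁ − q and |U| ≥ min₂ + q. -/

import Mathlib

/-- Domain of a heap: locations where the heap is defined. -/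
def hdom {U : Type*} {k : ℕ} (h : U → Option (Fin k → U)) : Set U := {u | (h u).isSome}

/-- Two heaps are disjoint iff their domains are disjoint. -/
def hdisj {U : Type*} {k : ℕ} (h₁ h₂ : U → Option (Fin k → U)) : Prop :=
  ∀ u, h₁ u = none ∨ h₂ u = none

section

open scoped Cardinal

theorem mk_add_mk_add_mk_le_of_disjoint {α : Type*} {A B C : Set α} (hAB : Disjoint A B)
    (hABC : Disjoint (A ∪ B) C) : #A + #B + #C ≤ #α := by
  rw [← Cardinal.mk_union_of_disjoint hAB, ← Cardinal.mk_union_of_disjoint hABC]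
  exact Cardinal.mk_set_le _

theorem disjoint_union_image_inter {α β : Type*} {f : α → β} {A B : Set β} {Y N : Set α}
    (hY : ∀ y ∈ Y, f y ∉ A) (hN : ∀ y ∈ N, f y ∉ B) :
    Disjoint (A ∪ B) (f '' (Y ∩ N)) := by
  rw [Set.disjoint_right]
  rintro _ ⟨y, ⟨hyY, hyN⟩, rfl⟩ (hyA | hyB)
  · exact hY y hyY hyA
  · exact hN y hyN hyB

theorem hdisj.disjoint_hdom {U : Type*} {k : ℕ} {h₁ h₂ : U → Option (Fin k → U)}
    (hd : hdisj h₁ h₂) : Disjoint (hdom h₁) (hdom h₂) := by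
  refine Set.disjoint_left.mpr fun u hu₁ hu₂ ↦ ?_
  obtain hnone | hnone := hd u
  · exact Option.isSome_iff_ne_none.mp hu₁ hnone
  · exact Option.isSome_iff_ne_none.mp hu₂ hnone

theorem hdisj.mk_hdom_add_mk_hdom_add_mk_image_le {U Var : Type*} {k : ℕ} {s : Var → U}
    {h h' : U → Option (Fin k → U)} (hd : hdisj h h') {Y N : Set Var}
    (hY : ∀ y ∈ Y, s y ∉ hdom h) (hN : ∀ y ∈ N, s y ∉ hdom h') :
    #(hdom h) + #(hdom h') + #(s '' (Y ∩ N)) ≤ #U :=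
  mk_add_mk_add_mk_le_of_disjoint hd.disjoint_hdom (disjoint_union_image_inter hY hN)

theorem stmt15_general {U Var : Type*} {k : ℕ} (s : Var → U)
    (h h' : U → Option (Fin k → U)) (hd : hdisj h h') (Y N : Set Var)
    (min₁ min₂ : Cardinal)
    (hY : ∀ y ∈ Y, s y ∉ hdom h) (hN : ∀ y ∈ N, s y ∉ hdom h')
    (hmin₁ : min₁ ≤ #(hdom h')) (hmin₂ : min₂ ≤ #(hdom h) + #(hdom h')) :
    #(hdom h) + min₁ + #(s '' (Y ∩ N)) ≤ #U ∧ min₂ + #(s '' (Y ∩ N)) ≤ #U := by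
  have hcard := hd.mk_hdom_add_mk_hdom_add_mk_image_le hY hN
  exact ⟨le_trans (by gcongr) hcard, le_trans (by gcongr) hcard⟩

end

/-- finite-universe septraction constraint.  Let `h'` be the
witness heap (disjoint from `h`), `Y` a set of variables unallocated in `h`,
`N = nvar(M₁)` a set of variables unallocated in `h'`, `min₁ ≤ |dom(h')|`
and `min₂ ≤ |dom(h)| + |dom(h')| = |dom(h ⊎ h')|`.  With `q` the number of
distinct locations in `s(Y ∩ N)`, we get `|dom(h)| ≤ |U| − min₁ − q` and
`|U| ≥ min₂ + q`. -/
theorem stmt15 {U Var : Type*} [Fintype U] [Nonempty U] [DecidableEq U]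
    [DecidableEq Var] {k : ℕ} (hk : 1 ≤ k) (s : Var → U)
    (h h' : U → Option (Fin k → U)) (hd : hdisj h h')
    (Y N : Finset Var) (min₁ min₂ : ℕ)
    (hY : ∀ y ∈ Y, s y ∉ hdom h)
    (hN : ∀ y ∈ N, s y ∉ hdom h')
    (hmin₁ : min₁ ≤ (hdom h').ncard)
    (hmin₂ : min₂ ≤ (hdom h).ncard + (hdom h').ncard) :
    (((hdom h).ncard : ℤ) ≤
        (Fintype.card U : ℤ) - (min₁ : ℤ) - (((Y ∩ N).image s).card : ℤ)) ∧
    ((min₂ : ℤ) + (((Y ∩ N).image s).card : ℤ) ≤ (Fintype.card U : ℤ)) := by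
  have hbounds := stmt15_general s h h' hd Y N min₁ min₂ hY hN
  simp only [← Finset.coe_inter, ← Finset.coe_image, ← Set.cast_ncard (Set.toFinite _),
    Set.ncard_coe_finset, Cardinal.mk_fintype, ← Nat.cast_add, Nat.cast_le] at hbounds
  grind
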